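/- Let G be a finite simple graph with m ≥ 1 edges and no isolated vertices. Then either (i) G is a complete graph of odd order, or (ii) f_2(G) ≥ m/2 + (1/4)·h(m) + 1/4, and there exists a 2-partition (V_1, V_2) of G such that max{e(V_1), e(V_2)} ≤ m/4 + (1/8)·h(m) and e(V_1, V_2) ≥ m/2 + (1/4)·h(m) + 1/4. -/

import Mathlib

open Finset

noncomputable def hfun (x : ℝ) : ℝ := Real.sqrt (2 * x + 1 / 4) - 1 / 2

variable {V : Type*} [Fintype V] [DecidableEq V]

/-- Number of edges of `G` with both endpoints in `S`. -/
def eIn (G : SimpleGraph V) [DecidableRel G.Adj] (S : Finset V) : ℕ :=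
  (Finset.univ.filter (fun p : V × V => G.Adj p.1 p.2 ∧ p.1 ∈ S ∧ p.2 ∈ S)).card / 2

/-- Number of edges of `G` with one endpoint in `S` and the other in `T` (for disjoint `S`, `T`). -/
def eCross (G : SimpleGraph V) [DecidableRel G.Adj] (S T : Finset V) : ℕ :=
  (Finset.univ.filter (fun p : V × V => G.Adj p.1 p.2 ∧ p.1 ∈ S ∧ p.2 ∈ T)).card

/-- `P` is a partition of the vertex set into `k` pairwise disjoint (possibly empty) parts. -/
def IsKPartition {k : ℕ} (P : Fin k → Finset V) : Prop :=
  (∀ i j : Fin k, i ≠ j → Disjoint (P i) (P j)) ∧ ∀ v : V, ∃ i, v ∈ P i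

/-- The number of crossing edges of a `k`-partition. -/
def crossTotal (G : SimpleGraph V) [DecidableRel G.Adj] {k : ℕ} (P : Fin k → Finset V) : ℕ :=
  ∑ i : Fin k, ∑ j : Fin k, if i < j then eCross G (P i) (P j) else 0

/-- `f_k(G)`: the maximum number of crossing edges over all `k`-partitions of `G`. -/
noncomputable def maxCut (G : SimpleGraph V) [DecidableRel G.Adj] (k : ℕ) : ℕ :=
  sSup {n : ℕ | ∃ P : Fin k → Finset V, IsKPartition P ∧ crossTotal G P = n}

/-!
Let `k` be the chromatic number of `G`. A minimal colouring has an edge between any two colour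
classes, so `k.choose 2 ≤ m`, and without isolated vertices equality forces `G = K_k`. Splitting an
even number of colour classes at random into two equal halves cuts enough edges on average. For odd
`k` one adds an empty class, and the integrality of the cut size makes up for the loss as soon as
`k.choose 2 < m`.

To make a large cut judicious, start from a maximum cut and move vertices out of its denser side `W`
as long as the cut stays large and the other side stays sparse. When no move is possible, all
vertices of `W` but at most one have many neighbours inside `W`; if `W` were still too dense, its
degree sum would exceed twice its number of edges.
-/

section Hfun

variable {a x : ℝ}

lemma hfun_nonneg (hx : 0 ≤ x) : 0 ≤ hfun x := by
  have : (1 / 2 : ℝ) ≤ Real.sqrt (2 * x + 1 / 4) := Real.le_sqrt_of_sq_le (by linarith)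
  simpa only [hfun, sub_nonneg]

lemma hfun_mul_hfun_add_one (hx : 0 ≤ x) : hfun x * (hfun x + 1) = 2 * x := by
  have := Real.sq_sqrt (show 0 ≤ 2 * x + 1 / 4 by positivity)
  unfold hfun
  linear_combination this

lemma le_hfun_of_mul_add_one_le (hx : 0 ≤ x) (h : a * (a + 1) ≤ 2 * x) : a ≤ hfun x := by
  by_contra! hlt
  have := hfun_nonneg hx
  have : hfun x * (hfun x + 1) < a * (a + 1) := by gcongr
  linarith [hfun_mul_hfun_add_one hx]

/-- The lower bound for the maximum cut of a graph with `x` edges: the classical bound of Edwards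
raised by `1 / 4`. -/
noncomputable def edwardsBound (x : ℝ) : ℝ := x / 2 + (1 / 4) * hfun x + 1 / 4

/-- The upper bound for the number of edges inside each part of a judicious partition of a graph
with `x` edges. -/
noncomputable def judiciousBound (x : ℝ) : ℝ := x / 4 + (1 / 8) * hfun x

lemma judiciousBound_nonneg (hx : 0 ≤ x) : 0 ≤ judiciousBound x := by
  have := hfun_nonneg hx
  unfold judiciousBound
  positivity

lemma edwardsBound_eq_two_mul_judiciousBound_add :
    edwardsBound x = 2 * judiciousBound x + 1 / 4 := by
  unfold edwardsBound judiciousBound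
  ring

end Hfun

section DegreeOn

variable {α : Type*} (G : SimpleGraph α) [DecidableRel G.Adj]

/-- The number of neighbours of `v` in `S`. -/
def degreeOn (v : α) (S : Finset α) : ℕ := #{w ∈ S | G.Adj v w}

lemma degreeOn_mono (v : α) {S T : Finset α} (h : S ⊆ T) : degreeOn G v S ≤ degreeOn G v T :=
  card_le_card (filter_subset_filter _ h)

lemma card_interedges_eq_sum_degreeOn (S T : Finset α) :
    #(G.interedges S T) = ∑ v ∈ S, degreeOn G v T := by
  simp only [SimpleGraph.interedges_def, degreeOn, card_filter, sum_product]

lemma card_interedges_comm (S T : Finset α) : #(G.interedges S T) = #(G.interedges T S) :=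
  have := G.symm
  Rel.card_interedges_comm S T

section DecidableEq

variable [DecidableEq α] {v : α} {S T : Finset α}

lemma degreeOn_insert_self (v : α) (S : Finset α) :
    degreeOn G v (insert v S) = degreeOn G v S := by
  simp only [degreeOn, filter_insert, SimpleGraph.irrefl, if_false]

lemma degreeOn_erase_self (v : α) (S : Finset α) :
    degreeOn G v (S.erase v) = degreeOn G v S := by
  rw [degreeOn, filter_erase, erase_eq_of_notMem (by simp), degreeOn]

lemma card_interedges_insert_left (hv : v ∉ S) :
    #(G.interedges (insert v S) T) = degreeOn G v T + #(G.interedges S T) := by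
  simp only [card_interedges_eq_sum_degreeOn, sum_insert hv]

lemma card_interedges_insert_right (hv : v ∉ T) :
    #(G.interedges S (insert v T)) = degreeOn G v S + #(G.interedges S T) := by
  rw [card_interedges_comm, card_interedges_insert_left G hv, card_interedges_comm]

lemma card_interedges_insert_self (hv : v ∉ S) :
    #(G.interedges (insert v S) (insert v S)) =
      #(G.interedges S S) + 2 * degreeOn G v S := by
  rw [card_interedges_insert_left G hv, card_interedges_insert_right G hv, degreeOn_insert_self]
  ring

end DecidableEq

variable {G} {u v : α} {W : Finset α}

lemma degreeOn_lt_card (hv : v ∈ W) : degreeOn G v W < #W :=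
  card_lt_card (filter_ssubset.2 ⟨v, hv, G.irrefl⟩)

lemma adj_of_card_le_degreeOn_add_one (hv : v ∈ W) (hu : u ∈ W) (huv : u ≠ v)
    (h : #W ≤ degreeOn G v W + 1) : G.Adj v u := by
  classical
  rw [← degreeOn_erase_self, ← card_erase_add_one hv, Nat.succ_le_succ_iff, degreeOn] at h
  have heq := eq_of_subset_of_card_le (filter_subset _ _) h
  exact (mem_filter.1 (heq ▸ mem_erase.2 ⟨huv, hu⟩)).2

-- If the exceptional vertex `u` has small degree, then some other vertex is not adjacent to it,
-- which forces `#W ≥ a + 2`; so the vertices other than `u` suffice.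
lemma mul_add_one_le_card_interedges_self {a : ℕ}
    (hdeg : ∀ v ∈ W, v ≠ u → a ≤ degreeOn G v W) (hne : ∃ v ∈ W, v ≠ u) :
    a * (a + 1) ≤ #(G.interedges W W) := by
  classical
  obtain ⟨w, hwW, hwu⟩ := hne
  have of_subset {Q : Finset α} (hQW : Q ⊆ W) (hQ : ∀ v ∈ Q, a ≤ degreeOn G v W)
      (hcard : a + 1 ≤ #Q) : a * (a + 1) ≤ #(G.interedges W W) :=
    calc a * (a + 1) ≤ #Q * a := by rw [mul_comm]; gcongr
      _ ≤ ∑ v ∈ Q, degreeOn G v W := by simpa using card_nsmul_le_sum Q _ a hQ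
      _ ≤ #(G.interedges W W) := by
        rw [card_interedges_eq_sum_degreeOn]
        exact sum_le_sum_of_subset hQW
  by_cases hu : u ∈ W → a ≤ degreeOn G u W
  · refine of_subset Subset.rfl (fun v hv ↦ ?_) ?_
    · rcases eq_or_ne v u with rfl | hvu
      exacts [hu hv, hdeg v hv hvu]
    · exact (hdeg w hwW hwu).trans_lt (degreeOn_lt_card hwW)
  · push Not at hu
    obtain ⟨huW, hua⟩ := hu
    refine of_subset (erase_subset u W)
      (fun v hv ↦ hdeg v (mem_of_mem_erase hv) (ne_of_mem_erase hv)) ?_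
    by_contra! hcard
    have hW : #W ≤ a + 1 := by rw [card_erase_of_mem huW] at hcard; omega
    have hadj : W.erase u ⊆ {v ∈ W | G.Adj u v} := fun v hv ↦ by
      obtain ⟨hvu, hvW⟩ := mem_erase.1 hv
      refine mem_filter.2 ⟨hvW, SimpleGraph.Adj.symm ?_⟩
      exact adj_of_card_le_degreeOn_add_one hvW huW hvu.symm
        (hW.trans (Nat.succ_le_succ (hdeg v hvW hvu)))
    have hu_le : #(W.erase u) ≤ degreeOn G u W := card_le_card hadj
    have hw_le := (hdeg w hwW hwu).trans_lt (degreeOn_lt_card hwW)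
    rw [card_erase_of_mem huW] at hu_le
    omega

end DegreeOn

section Cut

lemma card_interedges_univ {α : Type*} [Fintype α] (G : SimpleGraph α) [DecidableRel G.Adj] :
    #(G.interedges univ univ) = 2 * #G.edgeFinset := by
  rw [SimpleGraph.two_mul_card_edgeFinset, SimpleGraph.interedges_def, univ_product_univ]

variable (G : SimpleGraph V) [DecidableRel G.Adj] {v : V} {W : Finset V}

lemma card_interedges_self_add_compl_self_add_cut (S : Finset V) :
    #(G.interedges S S) + #(G.interedges Sᶜ Sᶜ) + 2 * #(G.interedges S Sᶜ) =
      2 * #G.edgeFinset := by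
  have hleft (T : Finset V) :
      #(G.interedges S T) + #(G.interedges Sᶜ T) = #(G.interedges univ T) := by
    simp only [card_interedges_eq_sum_degreeOn, sum_add_sum_compl]
  have hright (T : Finset V) :
      #(G.interedges T S) + #(G.interedges T Sᶜ) = #(G.interedges T univ) := by
    simpa only [card_interedges_comm G T] using hleft T
  rw [← card_interedges_univ, ← hleft, ← hright, ← hright, card_interedges_comm G Sᶜ S]
  ring

variable {G}

lemma card_interedges_erase_compl_erase (hv : v ∈ W) :
    #(G.interedges (W.erase v) (W.erase v)ᶜ) + degreeOn G v Wᶜ =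
      #(G.interedges W Wᶜ) + degreeOn G v W := by
  have hW : #(G.interedges W Wᶜ) = degreeOn G v Wᶜ + #(G.interedges (W.erase v) Wᶜ) := by
    rw [← card_interedges_insert_left G (notMem_erase v W), insert_erase hv]
  rw [compl_erase, card_interedges_insert_right G (by simpa using hv), degreeOn_erase_self, hW]
  ring

lemma card_interedges_compl_erase_self (hv : v ∈ W) :
    #(G.interedges (W.erase v)ᶜ (W.erase v)ᶜ) =
      #(G.interedges Wᶜ Wᶜ) + 2 * degreeOn G v Wᶜ := by
  rw [compl_erase, card_interedges_insert_self G (by simpa using hv)]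

lemma degreeOn_le_degreeOn_compl_of_max_cut
    (hmax : ∀ S, #(G.interedges S Sᶜ) ≤ #(G.interedges W Wᶜ)) (hv : v ∈ W) :
    degreeOn G v W ≤ degreeOn G v Wᶜ := by
  have := hmax (W.erase v)
  have := card_interedges_erase_compl_erase (G := G) hv
  omega

variable (G)

lemma exists_max_cut_compl_sparser :
    ∃ W, (∀ S, #(G.interedges S Sᶜ) ≤ #(G.interedges W Wᶜ)) ∧
      #(G.interedges Wᶜ Wᶜ) ≤ #(G.interedges W W) := by
  obtain ⟨M, hM⟩ := Finite.exists_max fun S ↦ #(G.interedges S Sᶜ)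
  rcases le_total #(G.interedges Mᶜ Mᶜ) #(G.interedges M M) with h | h
  · exact ⟨M, hM, h⟩
  · exact ⟨Mᶜ, fun S ↦ by simpa only [compl_compl, card_interedges_comm G Mᶜ] using hM S,
      by simpa only [compl_compl] using h⟩

end Cut

section Judicious

variable (G : SimpleGraph V) [DecidableRel G.Adj] {u v : V} {W : Finset V}

/-- The invariant of the procedure that turns a maximum cut into a judicious one by moving vertices
from `W` to `Wᶜ`: the cut is large, `Wᶜ` is sparse, and every vertex of `W` has at least as many
neighbours across the cut as on its own side. As `G.interedges Wᶜ Wᶜ` contains every edge inside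
`Wᶜ` twice, the sparsity bound is doubled. -/
structure IsHalfJudicious (W : Finset V) : Prop where
  degreeOn_le : ∀ v ∈ W, degreeOn G v W ≤ degreeOn G v Wᶜ
  edwardsBound_le : edwardsBound #G.edgeFinset ≤ #(G.interedges W Wᶜ)
  compl_sparse : #(G.interedges Wᶜ Wᶜ) ≤ 2 * judiciousBound #G.edgeFinset

variable {G}

lemma exists_isHalfJudicious {S : Finset V}
    (hS : edwardsBound #G.edgeFinset ≤ #(G.interedges S Sᶜ)) : ∃ W, IsHalfJudicious G W := by
  obtain ⟨W, hmax, hsparser⟩ := exists_max_cut_compl_sparser G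
  have hcut : edwardsBound #G.edgeFinset ≤ #(G.interedges W Wᶜ) :=
    hS.trans (by exact_mod_cast hmax S)
  refine ⟨W, fun v ↦ degreeOn_le_degreeOn_compl_of_max_cut hmax, hcut, ?_⟩
  have htotal : (#(G.interedges W W) + #(G.interedges Wᶜ Wᶜ) + 2 * #(G.interedges W Wᶜ) : ℝ) =
      2 * #G.edgeFinset := mod_cast card_interedges_self_add_compl_self_add_cut G W
  have hsparser' : (#(G.interedges Wᶜ Wᶜ) : ℝ) ≤ #(G.interedges W W) := mod_cast hsparser
  have hnonneg := hfun_nonneg (#G.edgeFinset).cast_nonneg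
  unfold edwardsBound at hcut
  unfold judiciousBound
  linarith

lemma IsHalfJudicious.two_mul_judiciousBound_lt_of_minimal (hW : Minimal (IsHalfJudicious G) W)
    (hv : v ∈ W) (hcut : edwardsBound #G.edgeFinset ≤ #(G.interedges (W.erase v) (W.erase v)ᶜ)) :
    2 * judiciousBound #G.edgeFinset < #(G.interedges (W.erase v)ᶜ (W.erase v)ᶜ) := by
  by_contra! hsparse
  refine hW.not_prop_of_lt (erase_ssubset hv) ⟨fun w hw ↦ ?_, hcut, hsparse⟩
  calc degreeOn G w (W.erase v) ≤ degreeOn G w W := degreeOn_mono G w (erase_subset v W)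
    _ ≤ degreeOn G w Wᶜ := hW.prop.degreeOn_le w (mem_of_mem_erase hw)
    _ ≤ degreeOn G w (W.erase v)ᶜ := degreeOn_mono G w (compl_subset_compl.2 (erase_subset v W))

lemma IsHalfJudicious.lt_degreeOn_of_minimal (hW : Minimal (IsHalfJudicious G) W) (hv : v ∈ W)
    (hcut : edwardsBound #G.edgeFinset ≤ #(G.interedges (W.erase v) (W.erase v)ᶜ)) :
    #(G.interedges W W) / 2 - judiciousBound #G.edgeFinset + hfun #G.edgeFinset / 2 + 1 / 4 <
      degreeOn G v W := by
  have hdense := two_mul_judiciousBound_lt_of_minimal hW hv hcut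
  rw [card_interedges_compl_erase_self hv] at hdense
  have hmove : (#(G.interedges (W.erase v) (W.erase v)ᶜ) + degreeOn G v Wᶜ : ℝ) =
      #(G.interedges W Wᶜ) + degreeOn G v W := mod_cast card_interedges_erase_compl_erase hv
  have htotal : (#(G.interedges W W) + #(G.interedges Wᶜ Wᶜ) + 2 * #(G.interedges W Wᶜ) : ℝ) =
      2 * #G.edgeFinset := mod_cast card_interedges_self_add_compl_self_add_cut G W
  push_cast at hdense
  unfold edwardsBound at hcut
  unfold judiciousBound at hdense ⊢
  linarith

lemma IsHalfJudicious.degreeOn_compl_sub_degreeOn_add_le (hW : IsHalfJudicious G W)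
    (hu : u ∈ W) (hv : v ∈ W) (huv : u ≠ v) :
    ((degreeOn G u Wᶜ : ℝ) - degreeOn G u W) + (degreeOn G v Wᶜ - degreeOn G v W) ≤
      #(G.interedges W Wᶜ) - #(G.interedges W W) := by
  simp only [card_interedges_eq_sum_degreeOn, Nat.cast_sum, ← sum_sub_distrib]
  rw [← sum_pair (f := fun w ↦ (degreeOn G w Wᶜ : ℝ) - degreeOn G w W) huv]
  refine sum_le_sum_of_subset_of_nonneg (by simp [insert_subset_iff, hu, hv]) fun w hw _ ↦ ?_
  exact sub_nonneg.2 (mod_cast hW.degreeOn_le w hw)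

-- Call the number of neighbours across the cut minus those inside `W` the imbalance of a vertex.
-- The surplus `s` of the cut over `edwardsBound` is less than the imbalance of each of the two
-- vertices, while the imbalances, which are positive integers, add up to less than `s + 1 / 4`.
lemma IsHalfJudicious.eq_of_erase_cut_lt (hW : IsHalfJudicious G W)
    (hdense : 2 * judiciousBound #G.edgeFinset < #(G.interedges W W)) (hu : u ∈ W) (hv : v ∈ W)
    (hucut : #(G.interedges (W.erase u) (W.erase u)ᶜ) < edwardsBound #G.edgeFinset)
    (hvcut : #(G.interedges (W.erase v) (W.erase v)ᶜ) < edwardsBound #G.edgeFinset) : u = v := by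
  by_contra huv
  have imbalance {w : V} (hw : w ∈ W)
      (hcut : #(G.interedges (W.erase w) (W.erase w)ᶜ) < edwardsBound #G.edgeFinset) :
      #(G.interedges W Wᶜ) - edwardsBound #G.edgeFinset <
        (degreeOn G w Wᶜ : ℝ) - degreeOn G w W := by
    have : (#(G.interedges (W.erase w) (W.erase w)ᶜ) + degreeOn G w Wᶜ : ℝ) =
        #(G.interedges W Wᶜ) + degreeOn G w W := mod_cast card_interedges_erase_compl_erase hw
    linarith
  have hu_imb := imbalance hu hucut
  have hv_imb := imbalance hv hvcut
  have hsurplus := hW.edwardsBound_le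
  have hv_one : (degreeOn G v W : ℝ) + 1 ≤ degreeOn G v Wᶜ := by
    have : (degreeOn G v W : ℝ) < degreeOn G v Wᶜ := by linarith
    exact_mod_cast this
  have hbound := edwardsBound_eq_two_mul_judiciousBound_add (x := #G.edgeFinset)
  linarith [hW.degreeOn_compl_sub_degreeOn_add_le hu hv huv]

lemma lt_mul_add_one_of_two_mul_judiciousBound_lt {x e : ℝ} (hx : 0 ≤ x)
    (he : 2 * judiciousBound x < e) :
    e < (e / 2 - judiciousBound x + hfun x / 2 + 1 / 4) *
      (e / 2 - judiciousBound x + hfun x / 2 + 1 / 4 + 1) := by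
  have hnonneg := hfun_nonneg hx
  set t := e / 2 - judiciousBound x with ht
  have ht0 : 0 < t := by linarith
  have hsub : (t + hfun x / 2 + 1 / 4) * (t + hfun x / 2 + 1 / 4 + 1) - e =
      (t - 1 / 4) ^ 2 + t * hfun x + hfun x / 4 + 1 / 4 := by
    unfold judiciousBound at ht
    linear_combination 2 * ht + (1 / 4) * hfun_mul_hfun_add_one hx
  rw [← sub_pos, hsub]
  positivity

lemma IsHalfJudicious.sparse_of_minimal (hW : Minimal (IsHalfJudicious G) W) :
    #(G.interedges W W) ≤ 2 * judiciousBound #G.edgeFinset := by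
  by_contra! hdense
  have hx : (0 : ℝ) ≤ #G.edgeFinset := Nat.cast_nonneg _
  have hJ := judiciousBound_nonneg hx
  obtain ⟨⟨w, w'⟩, hww'⟩ : (G.interedges W W).Nonempty :=
    card_pos.1 (by exact_mod_cast (by linarith : (0 : ℝ) < #(G.interedges W W)))
  obtain ⟨hw, hw', hadj⟩ := G.mk_mem_interedges_iff.1 hww'
  obtain ⟨u, hu⟩ : ∃ u, ∀ v ∈ W, v ≠ u →
      edwardsBound #G.edgeFinset ≤ #(G.interedges (W.erase v) (W.erase v)ᶜ) := by
    by_contra! hcut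
    obtain ⟨u, huW, -, hu⟩ := hcut w
    obtain ⟨v, hvW, hvu, hv⟩ := hcut u
    exact hvu (hW.prop.eq_of_erase_cut_lt hdense hvW huW hv hu)
  have hne : ∃ v ∈ W, v ≠ u := by
    rcases eq_or_ne w u with rfl | hwu
    exacts [⟨w', hw', hadj.ne'⟩, ⟨w, hw, hwu⟩]
  set d := #(G.interedges W W) / 2 - judiciousBound #G.edgeFinset + hfun #G.edgeFinset / 2 + 1 / 4
    with hd
  have hcount : ⌈d⌉₊ * (⌈d⌉₊ + 1) ≤ #(G.interedges W W) :=
    mul_add_one_le_card_interedges_self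
      (fun v hv hvu ↦ Nat.ceil_le.2 (lt_degreeOn_of_minimal hW hv (hu v hv hvu)).le) hne
  have hd0 : 0 ≤ d := by linarith [hfun_nonneg hx]
  have hlt : #(G.interedges W W) < d * (d + 1) :=
    lt_mul_add_one_of_two_mul_judiciousBound_lt hx hdense
  refine hlt.not_ge ?_
  calc d * (d + 1) ≤ ⌈d⌉₊ * (⌈d⌉₊ + 1) := by gcongr <;> exact Nat.le_ceil d
    _ ≤ #(G.interedges W W) := mod_cast hcount

theorem exists_judicious_cut {S : Finset V}
    (hS : edwardsBound #G.edgeFinset ≤ #(G.interedges S Sᶜ)) :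
    ∃ W, edwardsBound #G.edgeFinset ≤ #(G.interedges W Wᶜ) ∧
      #(G.interedges W W) ≤ 2 * judiciousBound #G.edgeFinset ∧
      #(G.interedges Wᶜ Wᶜ) ≤ 2 * judiciousBound #G.edgeFinset := by
  obtain ⟨W, hW⟩ := exists_minimal_of_wellFoundedLT _ (exists_isHalfJudicious hS)
  exact ⟨W, hW.prop.edwardsBound_le, IsHalfJudicious.sparse_of_minimal hW, hW.prop.compl_sparse⟩

end Judicious

section MinimalColoring

variable {α ι : Type*} {G : SimpleGraph α}

lemma exists_colorful_vertex (h : ∀ C : G.Coloring ι, Function.Surjective C) (C : G.Coloring ι)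
    (i : ι) : ∃ v, C v = i ∧ ∀ j ≠ i, ∃ w, G.Adj v w ∧ C w = j := by
  classical
  have : Nonempty ι := ⟨i⟩
  by_contra! hcon
  choose! g hgi hg using hcon
  let recolored : G.Coloring ι := .mk (fun v ↦ if C v = i then g v else C v) fun {v w} hvw ↦ by
    have := C.valid hvw
    have := hg v
    have := hg w
    grind [hvw.symm]
  obtain ⟨v, hv⟩ := h recolored i
  have hv' : (if C v = i then g v else C v) = i := hv
  have := hgi v
  grind

lemma mapEdgeSet_surjective (h : ∀ C : G.Coloring ι, Function.Surjective C) (C : G.Coloring ι) :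
    Function.Surjective C.mapEdgeSet := by
  rintro ⟨e, he⟩
  induction e with | _ i j
  obtain ⟨v, rfl, hv⟩ := exists_colorful_vertex h C i
  obtain ⟨w, hvw, rfl⟩ := hv j ((SimpleGraph.mem_edgeSet _).1 he).ne'
  exact ⟨⟨s(v, w), hvw⟩, rfl⟩

lemma coloring_injective_of_mapEdgeSet_injective
    (h : ∀ C : G.Coloring ι, Function.Surjective C) (hiso : ∀ v, ∃ w, G.Adj v w)
    (C : G.Coloring ι) (hC : Function.Injective C.mapEdgeSet) : Function.Injective C := by
  -- A second vertex of the colour class of a colourful vertex would give a second edge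
  -- with the same pair of colours.
  have eq_of_colorful {v v' : α} (hv : ∀ j ≠ C v, ∃ w, G.Adj v w ∧ C w = j) (hvv' : C v' = C v) :
      v' = v := by
    obtain ⟨w', hw'⟩ := hiso v'
    obtain ⟨w, hw, hww'⟩ := hv (C w') (hvv' ▸ (C.valid hw').symm)
    have hedge : (⟨s(v', w'), hw'⟩ : G.edgeSet) = ⟨s(v, w), hw⟩ :=
      hC (Subtype.ext (by simp [SimpleGraph.Hom.mapEdgeSet, hvv', hww']))
    rcases Sym2.eq_iff.1 (congrArg Subtype.val hedge) with ⟨rfl, -⟩ | ⟨hv'w, -⟩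
    · rfl
    · exact absurd ((congrArg C hv'w).trans hww') (C.valid hw')
  intro u u' huu'
  obtain ⟨v, hv, hcolorful⟩ := exists_colorful_vertex h C (C u)
  rw [← hv] at hcolorful
  rw [eq_of_colorful hcolorful hv.symm, eq_of_colorful hcolorful (huu'.symm.trans hv.symm)]

lemma eq_top_of_coloring_injective (h : ∀ C : G.Coloring ι, Function.Surjective C)
    (C : G.Coloring ι) (hC : Function.Injective C) : G = ⊤ := by
  refine top_le_iff.1 fun v w hvw ↦ ?_
  obtain ⟨v', hv', hcolorful⟩ := exists_colorful_vertex h C (C v)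
  obtain ⟨w', hadj, hw'⟩ := hcolorful (C w) (hC.ne hvw.symm)
  rwa [hC hv', hC hw'] at hadj

variable [Fintype α] [DecidableRel G.Adj] {k : ℕ}

lemma choose_two_le_card_edgeFinset (hk : G.chromaticNumber = k) :
    k.choose 2 ≤ #G.edgeFinset := by
  obtain ⟨C⟩ := SimpleGraph.chromaticNumber_le_iff_colorable.1 hk.le
  have hsurj := SimpleGraph.le_chromaticNumber_iff_forall_surjective.1 hk.ge
  have := Fintype.card_le_of_surjective _ (mapEdgeSet_surjective hsurj C)
  rwa [SimpleGraph.card_edgeSet, SimpleGraph.card_edgeSet,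
    SimpleGraph.card_edgeFinset_top_eq_card_choose_two, Fintype.card_fin] at this

lemma eq_top_of_card_edgeFinset_le_choose_two (hk : G.chromaticNumber = k)
    (hiso : ∀ v, ∃ w, G.Adj v w) (hle : #G.edgeFinset ≤ k.choose 2) : G = ⊤ := by
  obtain ⟨C⟩ := SimpleGraph.chromaticNumber_le_iff_colorable.1 hk.le
  have hsurj := SimpleGraph.le_chromaticNumber_iff_forall_surjective.1 hk.ge
  have hcard : Fintype.card G.edgeSet = Fintype.card (⊤ : SimpleGraph (Fin k)).edgeSet := by
    rw [SimpleGraph.card_edgeSet, SimpleGraph.card_edgeSet,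
      SimpleGraph.card_edgeFinset_top_eq_card_choose_two, Fintype.card_fin]
    exact hle.antisymm (choose_two_le_card_edgeFinset hk)
  have hbij := (Fintype.bijective_iff_surjective_and_card _).2
    ⟨mapEdgeSet_surjective hsurj C, hcard⟩
  exact eq_top_of_coloring_injective hsurj C
    (coloring_injective_of_mapEdgeSet_injective hsurj hiso C hbij.injective)

end MinimalColoring

section CutOfColoring

lemma card_filter_powersetCard_mem_notMem {ι : Type*} [DecidableEq ι] {s : Finset ι} {i j : ι}
    (hi : i ∈ s) (hj : j ∈ s) (hij : i ≠ j) (k : ℕ) :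
    #{T ∈ s.powersetCard (k + 1) | i ∈ T ∧ j ∉ T} = (#s - 2).choose k := by
  have heq : {T ∈ s.powersetCard (k + 1) | i ∈ T ∧ j ∉ T} =
      {T ∈ (s.erase j).powersetCard (k + 1) | {i} ⊆ T} := by
    ext T
    simp only [mem_filter, mem_powersetCard, subset_erase, singleton_subset_iff]
    tauto
  rw [heq, card_filter_powersetCard_subset _ _ _ (by simp [hi, hij]) (by simp), card_singleton,
    card_erase_of_mem hj, Nat.sub_sub, Nat.add_sub_cancel]

-- Count the pairs of an edge and a set of `k + 1` colours that separates its endpoints.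
lemma sum_powersetCard_card_interedges {α ι : Type*} [Fintype α] [Fintype ι] [DecidableEq ι]
    {G : SimpleGraph α} [DecidableRel G.Adj] (C : G.Coloring ι) (k : ℕ) :
    ∑ T ∈ (univ : Finset ι).powersetCard (k + 1), #(G.interedges {v | C v ∈ T} {v | C v ∉ T}) =
      2 * #G.edgeFinset * (Fintype.card ι - 2).choose k :=
  calc ∑ T ∈ (univ : Finset ι).powersetCard (k + 1), #(G.interedges {v | C v ∈ T} {v | C v ∉ T})
    _ = ∑ T ∈ (univ : Finset ι).powersetCard (k + 1),
          #{e ∈ G.interedges univ univ | C e.1 ∈ T ∧ C e.2 ∉ T} := by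
      refine sum_congr rfl fun T _ ↦ congrArg card (ext fun e ↦ ?_)
      simp only [SimpleGraph.mem_interedges_iff, mem_filter, mem_univ, true_and]
      tauto
    _ = ∑ e ∈ G.interedges univ univ,
          #{T ∈ (univ : Finset ι).powersetCard (k + 1) | C e.1 ∈ T ∧ C e.2 ∉ T} := by
      simp only [card_filter]
      exact sum_comm
    _ = ∑ _e ∈ G.interedges univ univ, (Fintype.card ι - 2).choose k :=
      sum_congr rfl fun e he ↦ card_filter_powersetCard_mem_notMem (mem_univ _) (mem_univ _)
        (C.valid (G.mem_interedges_iff.1 he).2.2) k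
    _ = 2 * #G.edgeFinset * (Fintype.card ι - 2).choose k := by
      rw [sum_const, card_interedges_univ, smul_eq_mul]

variable {G : SimpleGraph V} [DecidableRel G.Adj]

lemma exists_cut_of_coloring {ι : Type*} [Fintype ι] (C : G.Coloring ι) {k : ℕ}
    (hk : k < Fintype.card ι) :
    ∃ S : Finset V, 2 * #G.edgeFinset * (Fintype.card ι - 2).choose k ≤
      (Fintype.card ι).choose (k + 1) * #(G.interedges S Sᶜ) := by
  classical
  obtain ⟨T, -, hT⟩ := exists_max_image ((univ : Finset ι).powersetCard (k + 1))
    (fun T ↦ #(G.interedges {v | C v ∈ T} {v | C v ∉ T})) (powersetCard_nonempty.2 hk)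
  refine ⟨({v | C v ∈ T} : Finset V), ?_⟩
  rw [compl_filter, ← sum_powersetCard_card_interedges C, ← card_univ, ← card_powersetCard]
  exact sum_le_card_nsmul _ _ _ hT

lemma exists_cut_of_colorable_two_mul {n : ℕ} (hG : G.Colorable (2 * (n + 1))) :
    ∃ S : Finset V, #G.edgeFinset * (n + 1) ≤ #(G.interedges S Sᶜ) * (2 * n + 1) := by
  obtain ⟨C⟩ := hG
  obtain ⟨S, hS⟩ := exists_cut_of_coloring C (k := n) (by rw [Fintype.card_fin]; omega)
  rw [Fintype.card_fin, Nat.mul_succ, Nat.add_sub_cancel, ← Nat.centralBinom_eq_two_mul_choose,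
    ← Nat.mul_succ, ← Nat.centralBinom_eq_two_mul_choose] at hS
  refine ⟨S, Nat.le_of_mul_le_mul_left ?_ (Nat.mul_pos two_pos n.centralBinom_pos)⟩
  calc 2 * n.centralBinom * (#G.edgeFinset * (n + 1))
    _ = (n + 1) * (2 * #G.edgeFinset * n.centralBinom) := by ring
    _ ≤ (n + 1) * ((n + 1).centralBinom * #(G.interedges S Sᶜ)) := by gcongr
    _ = (2 * (2 * n + 1) * n.centralBinom) * #(G.interedges S Sᶜ) := by
      rw [← mul_assoc, Nat.succ_mul_centralBinom_succ]
    _ = 2 * n.centralBinom * (#(G.interedges S Sᶜ) * (2 * n + 1)) := by ring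

lemma edwardsBound_le_of_mul_le {x c a : ℝ} (hx : 0 ≤ x) (ha : 0 < a) (hax : a ≤ hfun x)
    (h : x * (a + 1) ≤ 2 * c * a) : edwardsBound x ≤ c := by
  have hmul := hfun_mul_hfun_add_one hx
  refine le_of_mul_le_mul_right ?_ (by positivity : 0 < 2 * a)
  calc edwardsBound x * (2 * a) = x * a + a * (hfun x + 1) / 2 := by unfold edwardsBound; ring
    _ ≤ x * a + hfun x * (hfun x + 1) / 2 := by gcongr; linarith
    _ = x * (a + 1) := by rw [hmul]; ring
    _ ≤ c * (2 * a) := by linarith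

lemma exists_edwardsBound_le_cut_of_le_hfun {n : ℕ} (hG : G.Colorable (2 * (n + 1)))
    (hn : (2 * n + 1 : ℝ) ≤ hfun #G.edgeFinset) :
    ∃ S : Finset V, edwardsBound #G.edgeFinset ≤ #(G.interedges S Sᶜ) := by
  obtain ⟨S, hS⟩ := exists_cut_of_colorable_two_mul hG
  have hS' : (#G.edgeFinset * (n + 1) : ℝ) ≤ #(G.interedges S Sᶜ) * (2 * n + 1) := mod_cast hS
  refine ⟨S, edwardsBound_le_of_mul_le (Nat.cast_nonneg _) (by positivity) hn ?_⟩
  linarith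

lemma exists_edwardsBound_le_cut_of_chromaticNumber_even {n : ℕ}
    (hk : G.chromaticNumber = (2 * (n + 1) : ℕ)) :
    ∃ S : Finset V, edwardsBound #G.edgeFinset ≤ #(G.interedges S Sᶜ) := by
  refine exists_edwardsBound_le_cut_of_le_hfun
    (SimpleGraph.chromaticNumber_le_iff_colorable.1 hk.le)
    (le_hfun_of_mul_add_one_le (Nat.cast_nonneg _) ?_)
  have hm : ((2 * (n + 1) : ℕ).choose 2 : ℝ) ≤ #G.edgeFinset :=
    mod_cast choose_two_le_card_edgeFinset hk
  rw [Nat.cast_choose_two] at hm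
  push_cast at hm
  linarith

lemma exists_edwardsBound_le_cut_of_chromaticNumber_odd {n : ℕ}
    (hk : G.chromaticNumber = (2 * n + 1 : ℕ)) (hlt : (2 * n + 1).choose 2 < #G.edgeFinset) :
    ∃ S : Finset V, edwardsBound #G.edgeFinset ≤ #(G.interedges S Sᶜ) := by
  have hG : G.Colorable (2 * (n + 1)) :=
    SimpleGraph.chromaticNumber_le_iff_colorable.1 (hk.trans_le (by gcongr; omega))
  rcases le_or_gt (2 * n + 1 : ℝ) (hfun #G.edgeFinset) with hn | hn
  · exact exists_edwardsBound_le_cut_of_le_hfun hG hn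
  obtain ⟨S, hS⟩ := exists_cut_of_colorable_two_mul hG
  have hm : n * (2 * n + 1) < #G.edgeFinset := by
    rwa [Nat.choose_two_right, Nat.add_sub_cancel, mul_left_comm,
      Nat.mul_div_cancel_left _ two_pos, mul_comm] at hlt
  have hmul : (#G.edgeFinset + n) * (2 * n + 1) < 2 * #(G.interedges S Sᶜ) * (2 * n + 1) :=
    calc (#G.edgeFinset + n) * (2 * n + 1)
      _ = #G.edgeFinset * (2 * n + 1) + n * (2 * n + 1) := by ring
      _ < #G.edgeFinset * (2 * n + 1) + #G.edgeFinset := by gcongr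
      _ = 2 * (#G.edgeFinset * (n + 1)) := by ring
      _ ≤ 2 * (#(G.interedges S Sᶜ) * (2 * n + 1)) := by gcongr
      _ = 2 * #(G.interedges S Sᶜ) * (2 * n + 1) := by ring
  have hcut : #G.edgeFinset + n < 2 * #(G.interedges S Sᶜ) :=
    lt_of_mul_lt_mul_right (a := 2 * n + 1) hmul (Nat.zero_le _)
  have hcut' : (#G.edgeFinset + n + 1 : ℝ) ≤ 2 * #(G.interedges S Sᶜ) := mod_cast hcut
  refine ⟨S, ?_⟩
  unfold edwardsBound
  linarith

theorem eq_top_and_odd_card_or_exists_edwardsBound_le_cut (hm : 0 < #G.edgeFinset)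
    (hiso : ∀ v, ∃ w, G.Adj v w) :
    (G = ⊤ ∧ Odd (Fintype.card V)) ∨
      ∃ S : Finset V, edwardsBound #G.edgeFinset ≤ #(G.interedges S Sᶜ) := by
  obtain ⟨k, hk⟩ := ENat.ne_top_iff_exists.1
    (SimpleGraph.chromaticNumber_ne_top_iff_exists.2 ⟨_, G.colorable_of_fintype⟩)
  rcases Nat.even_or_odd' k with ⟨n, rfl | rfl⟩
  · right
    cases n with
    | zero =>
      have := SimpleGraph.chromaticNumber_eq_zero_iff.1 hk.symm
      simp [Subsingleton.elim G ⊥] at hm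
    | succ n => exact exists_edwardsBound_le_cut_of_chromaticNumber_even hk.symm
  · rcases lt_or_ge ((2 * n + 1).choose 2) #G.edgeFinset with hlt | hle
    · exact .inr (exists_edwardsBound_le_cut_of_chromaticNumber_odd hk.symm hlt)
    · have htop := eq_top_of_card_edgeFinset_le_choose_two hk.symm hiso hle
      refine .inl ⟨htop, n, ?_⟩
      rw [htop, SimpleGraph.chromaticNumber_top] at hk
      exact_mod_cast hk.symm

end CutOfColoring

section Partition

variable (G : SimpleGraph V) [DecidableRel G.Adj]

lemma eCross_eq_card_interedges (S T : Finset V) : eCross G S T = #(G.interedges S T) := by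
  refine congrArg card (ext fun p ↦ ?_)
  simp only [mem_filter, mem_univ, true_and, SimpleGraph.mem_interedges_iff]
  tauto

lemma eIn_le_card_interedges_div_two (S : Finset V) :
    (eIn G S : ℝ) ≤ #(G.interedges S S) / 2 := by
  have : eIn G S = #(G.interedges S S) / 2 :=
    congrArg (· / 2) (eCross_eq_card_interedges G S S)
  rw [this]
  exact Nat.cast_div_le

lemma isKPartition_pair_compl (S : Finset V) : IsKPartition ![S, Sᶜ] := by
  refine ⟨fun i j hij ↦ ?_, fun v ↦ ?_⟩
  · fin_cases i <;> fin_cases j <;> simp_all [disjoint_compl_right, disjoint_compl_left]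
  · simpa [Fin.exists_fin_two] using em (v ∈ S)

lemma crossTotal_pair (S T : Finset V) : crossTotal G ![S, T] = #(G.interedges S T) := by
  simp [crossTotal, Fin.sum_univ_two, eCross_eq_card_interedges]

variable {G}

lemma crossTotal_le_maxCut {k : ℕ} {P : Fin k → Finset V} (hP : IsKPartition P) :
    crossTotal G P ≤ maxCut G k := by
  refine le_csSup (Set.Finite.bddAbove ?_) ⟨P, hP, rfl⟩
  exact (Set.finite_range (crossTotal G)).subset fun _ ⟨P, _, hn⟩ ↦ ⟨P, hn⟩

end Partition

/-- Stability of judicious 2-partitions: either `G` is a complete graph of odd order,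
or `f₂(G) ≥ m/2 + h(m)/4 + 1/4` and there is a 2-partition with
`max{e(V₁),e(V₂)} ≤ m/4 + h(m)/8` and `e(V₁,V₂) ≥ m/2 + h(m)/4 + 1/4`. -/
theorem stmt_3 {V : Type*} [Fintype V] [DecidableEq V]
    (G : SimpleGraph V) [DecidableRel G.Adj] (m : ℕ) (hm : m = G.edgeFinset.card)
    (hm1 : 1 ≤ m) (hiso : ∀ v : V, ∃ w : V, G.Adj v w) :
    (G = ⊤ ∧ Odd (Fintype.card V)) ∨
    (((m : ℝ) / 2 + (1 / 4) * hfun m + 1 / 4 ≤ (maxCut G 2 : ℝ)) ∧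
      ∃ P : Fin 2 → Finset V, IsKPartition P ∧
        (∀ i : Fin 2, (eIn G (P i) : ℝ) ≤ (m : ℝ) / 4 + (1 / 8) * hfun m) ∧
        (m : ℝ) / 2 + (1 / 4) * hfun m + 1 / 4 ≤ (crossTotal G P : ℝ)) := by
  subst hm
  refine (eq_top_and_odd_card_or_exists_edwardsBound_le_cut hm1 hiso).imp_right fun ⟨S, hS⟩ ↦ ?_
  obtain ⟨W, hcut, hW, hWc⟩ := exists_judicious_cut hS
  have hpart := isKPartition_pair_compl W
  have hcross : edwardsBound #G.edgeFinset ≤ (crossTotal G ![W, Wᶜ] : ℝ) := by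
    rwa [crossTotal_pair]
  have hin {T : Finset V} (hT : #(G.interedges T T) ≤ 2 * judiciousBound #G.edgeFinset) :
      (eIn G T : ℝ) ≤ judiciousBound #G.edgeFinset :=
    (eIn_le_card_interedges_div_two G T).trans (by linarith)
  exact ⟨hcross.trans (mod_cast crossTotal_le_maxCut hpart), ![W, Wᶜ], hpart,
    Fin.forall_fin_two.2 ⟨hin hW, hin hWc⟩, hcross⟩
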